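/- Let α = (α_2, 0, 0, …), so factorizations are into transpositions only. Then H̃(α) for α_2 = n − 1 (i.e., the number of inequivalent minimal transposition factorizations of the n-cycle) equals the number of plane trees (drawn in the plane, rooted at a leaf) with n − 1 vertices of degree 4, and these numbers satisfy T(2) = 1, T(3) = 3, T(4) = 12 for n = 2, 3, 4. -/

import Mathlib

/-- Equivalence of factorizations: generated by swapping two adjacent
commuting factors. -/
inductive FactEquiv {n : ℕ} : List (Equiv.Perm (Fin n)) → List (Equiv.Perm (Fin n)) → Prop
  | refl (l) : FactEquiv l l
  | swap (l₁ l₂ : List (Equiv.Perm (Fin n))) (a b : Equiv.Perm (Fin n)) (h : a * b = b * a) :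
      FactEquiv (l₁ ++ a :: b :: l₂) (l₁ ++ b :: a :: l₂)
  | trans {l₁ l₂ l₃} : FactEquiv l₁ l₂ → FactEquiv l₂ l₃ → FactEquiv l₁ l₃

/-- Minimal factorizations of the `n`-cycle into `n − 1` transpositions. -/
def TransFact (n : ℕ) : Type :=
  {l : List (Equiv.Perm (Fin n)) //
    l.length = n - 1 ∧ (∀ σ ∈ l, σ.IsSwap) ∧ l.prod = finRotate n}

/-- `T n` = number of inequivalent minimal transposition factorizations. -/
noncomputable def T (n : ℕ) : ℕ :=
  Nat.card (Quot (fun l₁ l₂ : TransFact n => FactEquiv l₁.1 l₂.1))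

/-- A plane tree: a node with an ordered list of child subtrees; `node 0 _`
is a leaf.  A rooted plane tree with a leaf root is encoded by the subtree
below the root, so a non-root vertex of degree `d` has `d − 1` children. -/
inductive PTree : Type
  | node : (k : ℕ) → (Fin k → PTree) → PTree

/-- Number of leaves of a plane tree. -/
def PTree.numLeaves : PTree → ℕ
  | .node k f => if k = 0 then 1 else ∑ i : Fin k, PTree.numLeaves (f i)

/-- Number of internal (non-leaf) vertices. -/
def PTree.internalCount : PTree → ℕ
  | .node k f => (if k = 0 then 0 else 1) + ∑ i : Fin k, PTree.internalCount (f i)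

/-- Every internal vertex has 3 children (degree 4 counting the parent edge). -/
def PTree.ternary : PTree → Prop
  | .node k f => (k = 0 ∨ k = 3) ∧ ∀ i, PTree.ternary (f i)

open List Equiv

inductive TT : Type
  | leaf : TT
  | node : TT → TT → TT → TT

def TT.size : TT → ℕ
  | .leaf => 0
  | .node a b c => a.size + b.size + c.size + 1

inductive Can {n : ℕ} : List (Fin n) → TT → List (Perm (Fin n)) → Prop
  | leaf (x) : Can [x] .leaf []
  | node (x j D1 D2 D3 t1 t2 t3 l1 l2 l3) (h1 : Can (D1 ++ [j]) t1 l1) (h2 : Can (j :: D2) t2 l2)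
      (h3 : Can (x :: D3) t3 l3) :
      Can (x :: (D1 ++ j :: (D2 ++ D3))) (.node t1 t2 t3) (l3 ++ (l1 ++ swap x j :: l2))

namespace FE
variable {n : ℕ}

theorem append_left {l l' : List (Perm (Fin n))} (k) (h : FactEquiv l l') :
    FactEquiv (k ++ l) (k ++ l') := by
  induction h with
  | refl l => exact .refl _
  | swap l₁ l₂ a b h => simpa using FactEquiv.swap (k ++ l₁) l₂ a b h
  | trans _ _ ih1 ih2 => exact ih1.trans ih2

theorem append_right {l l' : List (Perm (Fin n))} (k) (h : FactEquiv l l') :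
    FactEquiv (l ++ k) (l' ++ k) := by
  induction h with
  | refl l => exact .refl _
  | swap l₁ l₂ a b h => simpa using FactEquiv.swap l₁ (l₂ ++ k) a b h
  | trans _ _ ih1 ih2 => exact ih1.trans ih2

theorem perm {l l' : List (Perm (Fin n))} (h : FactEquiv l l') : l ~ l' := by
  induction h with
  | refl l => exact .refl _
  | swap l₁ l₂ a b h => exact List.Perm.append_left _ (List.Perm.swap _ _ _)
  | trans _ _ ih1 ih2 => exact ih1.trans ih2

theorem move (s : Perm (Fin n)) (l : List (Perm (Fin n))) (h : ∀ a ∈ l, s * a = a * s) :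
    FactEquiv (s :: l) (l ++ [s]) := by
  induction l with
  | nil => exact .refl _
  | cons a l ih =>
    refine (FactEquiv.swap [] l s a (h a (by simp))).trans ?_
    simpa using append_left [a] (ih fun b hb => h b (by simp [hb]))

theorem comm (l l' : List (Perm (Fin n))) (h : ∀ a ∈ l, ∀ b ∈ l', a * b = b * a) :
    FactEquiv (l ++ l') (l' ++ l) := by
  induction l with
  | nil => simpa using FactEquiv.refl _
  | cons a l ih =>
    have h1 := append_left [a] (ih fun b hb => h b (by simp [hb]))
    have h2 := append_right l (move a l' (h a (by simp)))
    simp only [List.cons_append, List.nil_append, List.append_assoc] at h1 h2 ⊢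
    exact h1.trans h2

end FE

def Sup {n : ℕ} (l : List (Perm (Fin n))) (c : List (Fin n)) : Prop :=
  ∀ s ∈ l, ∀ y, s y ≠ y → y ∈ c

section
variable {n : ℕ}

theorem Sup.mono {l : List (Perm (Fin n))} {c d} (h : Sup l c) (hcd : c ⊆ d) : Sup l d :=
  fun s hs y hy => hcd (h s hs y hy)

theorem Sup.append {l l' : List (Perm (Fin n))} {c} (h : Sup l c) (h' : Sup l' c) :
    Sup (l ++ l') c := by
  intro s hs y hy
  rcases List.mem_append.1 hs with hs | hs
  exacts [h s hs y hy, h' s hs y hy]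

theorem Sup.swap {a b : Fin n} {c} (ha : a ∈ c) (hb : b ∈ c) : Sup [swap a b] c := by
  intro s hs y hy
  simp only [List.mem_singleton] at hs
  subst hs
  by_cases h1 : y = a
  · exact h1 ▸ ha
  by_cases h2 : y = b
  · exact h2 ▸ hb
  exact absurd (swap_apply_of_ne_of_ne h1 h2) hy

theorem Sup.comm {l l' : List (Perm (Fin n))} {c d} (h : Sup l c) (h' : Sup l' d)
    (hcd : List.Disjoint c d) : FactEquiv (l ++ l') (l' ++ l) := by
  apply FE.comm
  intro a ha b hb
  apply Equiv.Perm.Disjoint.commute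
  intro x
  by_contra hx
  push Not at hx
  exact hcd (h a ha x hx.1) (h' b hb x hx.2)

theorem Sup.mem_iff {l : List (Perm (Fin n))} {c} (h : Sup l c) {s} (hs : s ∈ l) (y) :
    s y ∈ c ↔ y ∈ c := by
  by_cases hy : s y = y
  · rw [hy]
  · exact iff_of_true (h s hs _ fun h' => hy (s.injective h')) (h s hs _ hy)

theorem Can.sup {c t} {l : List (Perm (Fin n))} (h : Can c t l) : Sup l c := by
  induction h with
  | leaf x => intro s hs; simp at hs
  | node x j D1 D2 D3 t1 t2 t3 l1 l2 l3 h1 h2 h3 ih1 ih2 ih3 =>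
    refine (ih3.mono ?_).append ((ih1.mono ?_).append (Sup.append (l := [_]) (Sup.swap ?_ ?_) (ih2.mono ?_)))
    · intro y; simp; tauto
    · intro y; simp; tauto
    · simp
    · simp
    · intro y; simp; tauto

theorem Can.length {c t} {l : List (Perm (Fin n))} (h : Can c t l) :
    c.length = t.size + 1 ∧ l.length = t.size := by
  induction h with
  | leaf x => simp [TT.size]
  | node x j D1 D2 D3 t1 t2 t3 l1 l2 l3 h1 h2 h3 ih1 ih2 ih3 =>
    simp only [TT.size, List.length_cons, List.length_append, List.length_nil] at *
    omega

theorem Can.isSwap {c t} {l : List (Perm (Fin n))} (h : Can c t l) (hc : c.Nodup) :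
    ∀ s ∈ l, s.IsSwap := by
  induction h with
  | leaf x => simp
  | node x j D1 D2 D3 t1 t2 t3 l1 l2 l3 h1 h2 h3 ih1 ih2 ih3 =>
    have e1 : (D1 ++ [j]).Nodup := by grind
    have e2 : (j :: D2).Nodup := by grind
    have e3 : (x :: D3).Nodup := by grind
    have e4 : x ≠ j := by grind
    intro s hs
    simp only [List.mem_append, List.mem_cons] at hs
    rcases hs with hs | hs | hs | hs
    · exact ih3 e3 s hs
    · exact ih1 e1 s hs
    · exact ⟨x, j, e4, hs⟩
    · exact ih2 e2 s hs

theorem formPerm_split (l1 : List (Fin n)) (x l2) :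
    formPerm (l1 ++ x :: l2) = formPerm (l1 ++ [x]) * formPerm (x :: l2) := by
  induction l1 with
  | nil => simp
  | cons a l1 ih =>
    cases l1 with
    | nil => simp
    | cons b l1 =>
      simp only [List.cons_append, formPerm_cons_cons] at ih ⊢
      rw [ih, mul_assoc]

theorem formPerm_comm (l1 l2 : List (Fin n)) (h : (l1 ++ l2).Nodup) :
    formPerm (l1 ++ l2) = formPerm (l2 ++ l1) := by
  have := formPerm_rotate (l1 ++ l2) h l1.length
  rw [← this, List.rotate_append_length_eq]


theorem formPerm_cut (X I Y : List (Fin n)) (a b) (h : (X ++ (a :: I ++ b :: Y)).Nodup) :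
    formPerm (X ++ (a :: I ++ b :: Y)) = swap a b * (formPerm (a :: I) * formPerm (X ++ b :: Y)) := by
  rw [formPerm_comm _ _ h, formPerm_comm X (b :: Y) (by grind)]
  have : a :: I ++ b :: Y ++ X = (a :: I) ++ b :: (Y ++ X) := by simp
  rw [this, formPerm_split, formPerm_comm (a :: I) [b] (by grind)]
  simp [swap_comm a b, mul_assoc]

theorem Can.ne_nil {c t} {l : List (Perm (Fin n))} (h : Can c t l) : c ≠ [] := by
  have := h.length.1
  rintro rfl
  simp at this

theorem Can.prod {c t} {l : List (Perm (Fin n))} (h : Can c t l) (hc : c.Nodup) :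
    l.prod = formPerm c := by
  induction h with
  | leaf x => simp
  | node x j D1 D2 D3 t1 t2 t3 l1 l2 l3 h1 h2 h3 ih1 ih2 ih3 =>
    have e1 : (D1 ++ [j]).Nodup := by grind
    have e2 : (j :: D2).Nodup := by grind
    have e3 : (x :: D3).Nodup := by grind
    have key : formPerm (x :: (D1 ++ j :: (D2 ++ D3))) =
        formPerm (x :: D3) * (formPerm (D1 ++ [j]) * (swap x j * formPerm (j :: D2))) := by
      have a0 : x :: (D1 ++ j :: (D2 ++ D3)) = (x :: (D1 ++ j :: D2)) ++ D3 := by simp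
      have a1 : (D3 ++ x :: (D1 ++ j :: D2)).Nodup := by grind
      rw [a0, formPerm_comm _ _ (by grind), formPerm_split, formPerm_comm D3 [x] (by grind)]
      have a2 : x :: (D1 ++ j :: D2) = (x :: D1) ++ j :: D2 := by simp
      rw [a2, formPerm_split]
      have a3 : x :: D1 ++ [j] = [x] ++ (D1 ++ [j]) := by simp
      rw [a3, formPerm_comm [x] (D1 ++ [j]) (by grind)]
      have a4 : D1 ++ [j] ++ [x] = D1 ++ [j, x] := by simp
      rw [a4, formPerm_append_pair, swap_comm j x]
      simp [mul_assoc]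
    rw [key, List.prod_append, List.prod_append, List.prod_cons, ih1 e1, ih2 e2, ih3 e3]

end
section
variable {n : ℕ}

theorem can_exists (t : TT) : ∀ c : List (Fin n), c.length = t.size + 1 → ∃ l, Can c t l := by
  induction t with
  | leaf =>
    intro c hc
    obtain ⟨x, rfl⟩ := List.length_eq_one_iff.1 hc
    exact ⟨[], .leaf x⟩
  | node t1 t2 t3 ih1 ih2 ih3 =>
    intro c hc
    simp only [TT.size] at hc
    rcases c with _ | ⟨x, r⟩
    · simp at hc
    simp only [List.length_cons] at hc
    rcases hr : r.drop t1.size with _ | ⟨j, r'⟩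
    · have := congrArg List.length hr
      simp at this
      omega
    have hlen := congrArg List.length hr
    simp only [List.length_drop, List.length_cons] at hlen
    obtain ⟨l1, h1⟩ := ih1 (r.take t1.size ++ [j]) (by simp; omega)
    obtain ⟨l2, h2⟩ := ih2 (j :: r'.take t2.size) (by simp; omega)
    obtain ⟨l3, h3⟩ := ih3 (x :: r'.drop t2.size) (by simp; omega)
    have := Can.node _ _ _ _ _ _ _ _ _ _ _ h1 h2 h3
    rw [List.take_append_drop, ← hr, List.take_append_drop] at this
    exact ⟨_, this⟩

theorem split2 {X E1 E2 : List (Fin n)} {b Y} (h : X ++ b :: Y = E1 ++ E2) :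
    (∃ Y1, E1 = X ++ b :: Y1 ∧ Y = Y1 ++ E2) ∨ ∃ X2, X = E1 ++ X2 ∧ E2 = X2 ++ b :: Y := by
  rcases List.append_eq_append_iff.1 h with ⟨as, h1, h2⟩ | ⟨cs, h1, h2⟩
  · rcases as with _ | ⟨a, as⟩
    · right
      refine ⟨[], by simpa using h1.symm, by simpa using h2.symm⟩
    · left
      simp only [List.cons_append, List.cons.injEq] at h2
      obtain ⟨rfl, rfl⟩ := h2
      exact ⟨as, h1, rfl⟩
  · exact Or.inr ⟨cs, h1, h2⟩

theorem FE.left_comm {A P R : List (Perm (Fin n))} {c d} (hA : Sup A c) (hP : Sup P d)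
    (h : List.Disjoint c d) : FactEquiv (A ++ (P ++ R)) (P ++ (A ++ R)) := by
  have := FE.append_right R (hA.comm hP h)
  simpa using this

theorem merge (N : ℕ) : ∀ (tI tO : TT) (X : List (Fin n)) (a : Fin n) (I : List (Fin n)) (b : Fin n)
    (Y : List (Fin n)) (lI lO : List (Perm (Fin n))), tI.size + tO.size < N →
    Can (a :: I) tI lI → Can (X ++ b :: Y) tO lO → (X ++ (a :: I ++ b :: Y)).Nodup →
    ∃ t l, Can (X ++ (a :: I ++ b :: Y)) t l ∧ FactEquiv (swap a b :: lI ++ lO) l := by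
  induction N with
  | zero => intro _ _ _ _ _ _ _ _ _ h; omega
  | succ N ih =>
  intro tI tO X a I b Y lI lO hN hI hO hnd
  have hAs : Sup (swap a b :: lI) (a :: (I ++ [b])) :=
    Sup.append (l := [_]) (Sup.swap (by simp) (by simp)) (hI.sup.mono (by intro y; simp; tauto))
  rcases X with _ | ⟨x0, X'⟩
  · cases hI with
    | leaf =>
      refine ⟨.node .leaf tO .leaf, _, ?_, FactEquiv.refl _⟩
      simpa using Can.node a b [] Y [] .leaf tO .leaf [] lO [] (.leaf b) hO (.leaf a)
    | node x j D1 D2 D3 t1 t2 t3 l1 l2 l3 h1 h2 h3 =>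
      simp only [TT.size] at hN
      obtain ⟨t', l', hC, hE⟩ := ih t3 tO [] a D3 b Y l3 lO (by omega) h3 hO (by grind)
      refine ⟨.node t1 t2 t', l' ++ (l1 ++ swap a j :: l2), ?_, ?_⟩
      · simpa using Can.node a j D1 D2 (D3 ++ b :: Y) t1 t2 t' l1 l2 l' h1 h2 hC
      · have hM : Sup (l1 ++ swap a j :: l2) (a :: (D1 ++ j :: D2)) :=
          (h1.sup.mono (by intro y; simp; tauto)).append (Sup.append (l := [_])
            (Sup.swap (by simp) (by simp)) (h2.sup.mono (by intro y; simp; tauto)))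
        have hd : List.Disjoint (a :: (D1 ++ j :: D2)) ([] ++ b :: Y) := by
          intro y hy hy'
          clear * - hnd hy hy'
          simp only [List.nodup_append, List.nodup_cons, List.mem_append, List.mem_cons, List.cons_append] at hnd hy hy'
          grind
        have e1 := FE.append_left (swap a b :: l3) (hM.comm hO.sup hd)
        have e2 := FE.append_right (l1 ++ swap a j :: l2) hE
        simp only [List.cons_append, List.append_assoc] at e1 e2 ⊢
        exact e1.trans e2
  · generalize hC : x0 :: X' ++ b :: Y = C at hO
    cases hO with
    | leaf x => simp at hC
    | node x j D1 D2 D3 t1 t2 t3 l1 l2 l3 h1 h2 h3 =>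
      simp only [TT.size] at hN
      simp only [List.cons_append, List.cons.injEq] at hC
      obtain ⟨rfl, hC⟩ := hC
      have hC' : X' ++ b :: Y = (D1 ++ [j]) ++ (D2 ++ D3) := by simpa using hC
      rcases split2 hC' with ⟨Y1, e1, rfl⟩ | ⟨X2, rfl, e2⟩
      · obtain ⟨Z, z, hz⟩ : ∃ Z z, b :: Y1 = Z ++ [z] :=
          ⟨_, _, (List.dropLast_append_getLast (List.cons_ne_nil b Y1)).symm⟩
        have e1' := e1
        rw [hz, ← List.append_assoc] at e1'
        obtain ⟨rfl, e3⟩ := List.append_inj' e1' rfl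
        obtain rfl : j = z := by simpa using e3
        rw [e1] at h1
        obtain ⟨t', l', hC, hE⟩ := ih tI t1 X' a I b Y1 lI l1 (by omega) hI h1 (by grind)
        rw [hz] at hC
        have hC2 : Can ((X' ++ (a :: I ++ Z)) ++ [j]) t' l' := by simpa using hC
        refine ⟨.node t' t2 t3, l3 ++ (l' ++ swap x0 j :: l2), ?_, ?_⟩
        rotate_left 1
        · have hd : List.Disjoint (a :: (I ++ [b])) (x0 :: D3) := by
            intro y hy hy'
            clear * - hnd hy hy'
            simp only [List.nodup_append, List.nodup_cons, List.mem_append, List.mem_cons, List.cons_append] at hnd hy hy'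
            grind
          refine (FE.left_comm hAs h3.sup hd).trans ?_
          have := FE.append_left l3 (FE.append_right (swap x0 j :: l2) hE)
          rw [List.append_assoc] at this
          exact this
        · have := Can.node x0 j _ D2 D3 _ _ _ _ _ _ hC2 h2 h3
          have hl : x0 :: (X' ++ (a :: I ++ Z) ++ j :: (D2 ++ D3)) =
              x0 :: X' ++ (a :: I ++ b :: (Y1 ++ (D2 ++ D3))) := by
            have : b :: (Y1 ++ (D2 ++ D3)) = (b :: Y1) ++ (D2 ++ D3) := rfl
            rw [this, hz]; simp
          rw [hl] at this
          exact this
      · rcases split2 e2.symm with ⟨Y2, rfl, rfl⟩ | ⟨X3, rfl, rfl⟩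
        · obtain ⟨t', l', hC, hE⟩ := ih tI t2 (j :: X2) a I b Y2 lI l2 (by omega) hI h2 (by grind)
          have := Can.node x0 j D1 _ D3 _ _ _ _ _ _ h1 hC h3
          have hl : x0 :: (D1 ++ j :: ((X2 ++ (a :: I ++ b :: Y2)) ++ D3)) =
            x0 :: (D1 ++ [j] ++ X2) ++ (a :: I ++ b :: (Y2 ++ D3)) := by simp
          rw [← hl]
          refine ⟨_, _, this, ?_⟩
          have hP : Sup (l3 ++ (l1 ++ [swap x0 j])) (x0 :: (D1 ++ j :: D3)) :=
            (h3.sup.mono (by intro y; simp; tauto)).append ((h1.sup.mono (by intro y; simp; tauto)).append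
              (Sup.swap (by simp) (by simp)))
          have hd : List.Disjoint (a :: (I ++ [b])) (x0 :: (D1 ++ j :: D3)) := by
            intro y hy hy'
            clear * - hnd hy hy'
            simp only [List.nodup_append, List.nodup_cons, List.mem_append, List.mem_cons, List.cons_append] at hnd hy hy'
            grind
          have q1 := FE.left_comm (R := l2) hAs hP hd
          have q2 := FE.append_left (l3 ++ (l1 ++ [swap x0 j])) hE
          simp only [List.cons_append, List.append_assoc, List.nil_append] at q1 q2 ⊢
          exact q1.trans q2
        · obtain ⟨t', l', hC, hE⟩ := ih tI t3 (x0 :: X3) a I b Y lI l3 (by omega) hI h3 (by grind)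
          have := Can.node x0 j D1 D2 _ _ _ _ _ _ _ h1 h2 hC
          have hl : x0 :: (D1 ++ j :: (D2 ++ (X3 ++ (a :: I ++ b :: Y)))) =
            x0 :: (D1 ++ [j] ++ (D2 ++ X3)) ++ (a :: I ++ b :: Y) := by simp
          rw [← hl]
          refine ⟨_, _, this, ?_⟩
          have q2 := FE.append_right (l1 ++ swap x0 j :: l2) hE
          simp only [List.cons_append, List.append_assoc] at q2 ⊢
          exact q2

end
inductive CanL {n : ℕ} : List (List (Fin n)) → List (Perm (Fin n)) → Prop
  | nil : CanL [] []
  | cons (c cs t l ls) (h : Can c t l) (hs : CanL cs ls) : CanL (c :: cs) (l ++ ls)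

section
variable {n : ℕ}

theorem formPerm_comm_disj {c d : List (Fin n)} (h : List.Disjoint c d) :
    formPerm c * formPerm d = formPerm d * formPerm c := by
  apply Equiv.Perm.Disjoint.commute
  intro x
  by_contra hx
  push Not at hx
  exact h (mem_of_formPerm_apply_ne hx.1) (mem_of_formPerm_apply_ne hx.2)

theorem prod_perm {cs cs' : List (List (Fin n))} (h : cs ~ cs') (hn : cs.flatten.Nodup) :
    (cs.map formPerm).prod = (cs'.map formPerm).prod := by
  induction h with
  | nil => rfl
  | cons c _ ih =>
    simp only [List.flatten_cons] at hn
    simp [ih hn.of_append_right]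
  | swap c d l =>
    simp only [List.flatten_cons, ← List.append_assoc] at hn
    have hd := List.disjoint_of_nodup_append hn.of_append_left
    simp only [List.map_cons, List.prod_cons, ← mul_assoc]
    rw [formPerm_comm_disj hd]
  | trans h1 h2 ih1 ih2 => exact (ih1 hn).trans (ih2 (h1.flatten.nodup_iff.1 hn))

theorem CanL.perm {cs cs' : List (List (Fin n))} (h : cs ~ cs') (hn : cs.flatten.Nodup) :
    ∀ l, CanL cs l → ∃ l', CanL cs' l' ∧ FactEquiv l l' := by
  induction h with
  | nil => exact fun l hl => ⟨l, hl, .refl _⟩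
  | cons c _ ih =>
    intro l hl
    simp only [List.flatten_cons] at hn
    cases hl with
    | cons _ _ t l ls h hs =>
      obtain ⟨l', h1, h2⟩ := ih hn.of_append_right _ hs
      exact ⟨_, .cons _ _ _ _ _ h h1, FE.append_left _ h2⟩
  | swap c d l =>
    intro l hl
    simp only [List.flatten_cons, ← List.append_assoc] at hn
    have hd := List.disjoint_of_nodup_append hn.of_append_left
    cases hl with
    | cons _ _ t l ls h hs =>
      cases hs with
      | cons _ _ t' l' ls' h' hs' =>
        exact ⟨_, .cons _ _ _ _ _ h' (.cons _ _ _ _ _ h hs'), FE.left_comm h.sup h'.sup hd⟩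
  | trans h1 h2 ih1 ih2 =>
    intro l hl
    obtain ⟨l', h3, h4⟩ := ih1 hn _ hl
    obtain ⟨l'', h5, h6⟩ := ih2 (h1.flatten.nodup_iff.1 hn) _ h3
    exact ⟨l'', h5, h4.trans h6⟩

def Goal (l : List (Perm (Fin n))) (cs : List (List (Fin n))) : Prop :=
  cs.flatten.length ≤ l.length + cs.length ∧
    (cs.flatten.length = l.length + cs.length → ∃ l', CanL cs l' ∧ FactEquiv l l')

theorem Goal.perm {l : List (Perm (Fin n))} {cs cs'} (h : cs ~ cs') (hn : cs.flatten.Nodup)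
    (hg : Goal l cs) : Goal l cs' := by
  unfold Goal
  rw [← h.flatten.length_eq, ← h.length_eq]
  refine ⟨hg.1, fun he => ?_⟩
  obtain ⟨l', h1, h2⟩ := hg.2 he
  obtain ⟨l'', h3, h4⟩ := CanL.perm h hn _ h1
  exact ⟨l'', h3, h2.trans h4⟩

theorem goal_nil {cs : List (List (Fin n))} (hn : cs.flatten.Nodup) (he : [] ∉ cs)
    (hp : (cs.map formPerm).prod = 1) : Goal [] cs := by
  have hlen : ∀ c ∈ cs, ∃ x, c = [x] := by
    intro c hc
    rcases c with _ | ⟨x, _ | ⟨y, c⟩⟩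
    · exact absurd hc he
    · exact ⟨x, rfl⟩
    · exfalso
      have hperm := List.perm_cons_erase hc
      rw [prod_perm hperm hn] at hp
      have hn' := hperm.flatten.nodup_iff.1 hn
      set rest := cs.erase (x :: y :: c)
      simp only [List.map_cons, List.prod_cons, List.flatten_cons] at hp hn'
      have hd := List.disjoint_of_nodup_append hn'
      have hfix : ∀ rs : List (List (Fin n)), x ∉ rs.flatten → (rs.map formPerm).prod x = x := by
        intro rs
        induction rs with
        | nil => simp
        | cons r rs ih =>
          intro h
          simp only [List.flatten_cons, List.mem_append, not_or] at h
          simp [ih h.2, formPerm_apply_of_notMem h.1]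
      have h1 := congrArg (fun p : Perm (Fin n) => p x) hp
      simp only [Equiv.Perm.coe_mul, Function.comp_apply, Equiv.Perm.coe_one, id] at h1
      rw [hfix rest (fun h => hd (by simp) h), formPerm_apply_head _ _ _ hn'.of_append_left] at h1
      have := hn'.of_append_left
      simp [h1] at this
  clear hn he hp
  have : cs.flatten.length = cs.length ∧ CanL cs [] := by
    induction cs with
    | nil => exact ⟨rfl, .nil⟩
    | cons c cs ih =>
      obtain ⟨x, rfl⟩ := hlen c (by simp)
      obtain ⟨h1, h2⟩ := ih fun c hc => hlen c (by simp [hc])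
      exact ⟨by simpa using h1, .cons _ _ _ _ _ (.leaf x) h2⟩
  refine ⟨by simp [this.1], fun _ => ⟨[], this.2, .refl _⟩⟩

theorem goal_same {l : List (Perm (Fin n))} {X I Y : List (Fin n)} {a b rest}
    (hn : ((X ++ (a :: I ++ b :: Y)) :: rest).flatten.Nodup)
    (hg : Goal l ((a :: I) :: (X ++ b :: Y) :: rest)) :
    Goal (swap a b :: l) ((X ++ (a :: I ++ b :: Y)) :: rest) := by
  unfold Goal at *
  simp only [List.flatten_cons, List.length_append, List.length_cons] at hg ⊢
  refine ⟨by omega, fun h => ?_⟩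
  obtain ⟨l', h1, h2⟩ := hg.2 (by omega)
  cases h1 with
  | cons _ _ tI lI ls hI hs =>
    cases hs with
    | cons _ _ tO lO ls' hO hs' =>
      simp only [List.flatten_cons] at hn
      obtain ⟨t, l'', h3, h4⟩ := merge _ tI tO X a I b Y lI lO (Nat.lt_succ_self _) hI hO
        hn.of_append_left
      refine ⟨_, .cons _ _ _ _ _ h3 hs', ?_⟩
      have q1 := FE.append_left [swap a b] h2
      have q2 := FE.append_right ls' h4
      simp only [List.cons_append, List.nil_append, List.append_assoc] at q1 q2
      exact q1.trans q2

theorem split_mem {c : List (Fin n)} {a b} (ha : a ∈ c) (hb : b ∈ c) (hab : a ≠ b) :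
    (∃ X I Y, c = X ++ (a :: I ++ b :: Y)) ∨ ∃ X I Y, c = X ++ (b :: I ++ a :: Y) := by
  obtain ⟨s, t, rfl⟩ := List.append_of_mem ha
  simp only [List.mem_append, List.mem_cons] at hb
  rcases hb with hb | hb | hb
  · obtain ⟨u, v, rfl⟩ := List.append_of_mem hb
    right
    exact ⟨u, v, t, by simp⟩
  · exact absurd hb.symm hab
  · obtain ⟨u, v, rfl⟩ := List.append_of_mem hb
    left
    exact ⟨s, u, v, by simp⟩

theorem main_goal (l : List (Perm (Fin n))) : ∀ cs : List (List (Fin n)), (∀ s ∈ l, s.IsSwap) →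
    cs.flatten.Nodup → (∀ x, x ∈ cs.flatten) → [] ∉ cs → l.prod = (cs.map formPerm).prod →
    Goal l cs := by
  induction l with
  | nil => exact fun cs _ hn _ he hp => goal_nil hn he (by simpa using hp.symm)
  | cons s l ih =>
    intro cs hs hn hx he hp
    have hs' : ∀ s ∈ l, s.IsSwap := fun s h => hs s (by simp [h])
    obtain ⟨a, b, hab, rfl⟩ := hs s (by simp)
    have step : ∀ X I Y a b rest, a ≠ b → l.prod = swap a b * (cs.map formPerm).prod →
        cs ~ (X ++ (a :: I ++ b :: Y)) :: rest → Goal (swap a b :: l) cs := by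
      intro X I Y a b rest hab hp hperm
      have hn' := hperm.flatten.nodup_iff.1 hn
      refine Goal.perm hperm.symm hn' (goal_same hn' ?_)
      have hP : ((X ++ (a :: I ++ b :: Y)) :: rest).flatten ~
          ((a :: I) :: (X ++ b :: Y) :: rest).flatten := by
        simp only [List.flatten_cons, ← List.append_assoc]
        exact ((List.perm_append_comm).append_right _).append_right _
      apply ih _ hs'
      · exact hP.nodup_iff.1 hn'
      · intro x
        exact hP.mem_iff.1 (hperm.flatten.mem_iff.1 (hx x))
      · have : [] ∉ rest := fun h => he (hperm.mem_iff.2 (by simp [h]))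
        simp [this]
      · rw [hp, prod_perm hperm hn]
        simp only [List.map_cons, List.prod_cons]
        rw [formPerm_cut]
        · simp only [mul_assoc]
          rw [swap_mul_self_mul]
        · simp only [List.flatten_cons] at hn'
          exact hn'.of_append_left
    have hp' : l.prod = swap a b * (cs.map formPerm).prod := by
      rw [← hp, List.prod_cons, swap_mul_self_mul]
    obtain ⟨c, hc, hac⟩ := List.mem_flatten.1 (hx a)
    have hperm := List.perm_cons_erase hc
    by_cases hbc : b ∈ c
    · rcases split_mem hac hbc hab with ⟨X, I, Y, rfl⟩ | ⟨X, I, Y, rfl⟩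
      · exact step X I Y a b _ hab hp' hperm
      · rw [Equiv.swap_comm a b]
        rw [Equiv.swap_comm a b] at hp'
        exact step X I Y b a _ hab.symm hp' hperm
    · set rest := cs.erase c
      have hb : b ∈ rest.flatten := by
        have := hperm.flatten.mem_iff.1 (hx b)
        simp only [List.flatten_cons, List.mem_append] at this
        exact this.resolve_left hbc
      obtain ⟨d, hd, hbd⟩ := List.mem_flatten.1 hb
      have hperm2 : cs ~ d :: c :: rest.erase d :=
        (hperm.trans ((List.perm_cons_erase hd).cons _)).trans (List.Perm.swap _ _ _)
      set rest2 := rest.erase d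
      obtain ⟨X1, Y1, rfl⟩ := List.append_of_mem hac
      obtain ⟨X2, Y2, rfl⟩ := List.append_of_mem hbd
      have hn2 := hperm2.flatten.nodup_iff.1 hn
      have hP : ((X2 ++ b :: Y2) :: (X1 ++ a :: Y1) :: rest2).flatten ~
          ((X1 ++ (b :: (Y2 ++ X2) ++ a :: Y1)) :: rest2).flatten := by
        simp only [List.flatten_cons, ← List.append_assoc]
        refine List.Perm.append_right _ ?_
        have e : X1 ++ b :: (Y2 ++ X2) ++ a :: Y1 = X1 ++ (b :: Y2 ++ X2) ++ a :: Y1 := by simp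
        rw [e]
        refine (((List.perm_append_comm (l₁ := X2) (l₂ := b :: Y2)).append_right X1).trans
          List.perm_append_comm).append_right _
      have hnd : (X1 ++ (b :: (Y2 ++ X2) ++ a :: Y1)).Nodup := by
        have := hP.nodup_iff.1 hn2
        simp only [List.flatten_cons] at this
        exact this.of_append_left
      have := ih ((X1 ++ (b :: (Y2 ++ X2) ++ a :: Y1)) :: rest2) hs' (hP.nodup_iff.1 hn2)
        (fun x => hP.mem_iff.1 (hperm2.flatten.mem_iff.1 (hx x)))
        (by
          have : [] ∉ rest2 := fun h => he (hperm2.mem_iff.2 (by simp [h]))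
          simp [this])
        (by
          rw [hp', prod_perm hperm2 hn]
          simp only [List.map_cons, List.prod_cons]
          rw [formPerm_cut _ _ _ _ _ hnd, formPerm_comm X2 (b :: Y2)
            (by simp only [List.flatten_cons] at hn2; exact hn2.of_append_left), Equiv.swap_comm a b]
          simp only [mul_assoc, List.cons_append])
      have h1 := this.1
      have h2 := hperm2.flatten.length_eq
      have h3 := hperm2.length_eq
      refine Goal.perm (List.Perm.refl cs) hn ?_
      unfold Goal
      simp only [List.flatten_cons, List.length_append, List.length_cons] at h1 h2 h3 ⊢
      exact ⟨by omega, fun h => by omega⟩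

theorem surj {c : List (Fin n)} {l : List (Perm (Fin n))} (hs : ∀ s ∈ l, s.IsSwap) (hn : c.Nodup)
    (hc : ∀ x, x ∈ c) (h0 : c ≠ []) (hp : l.prod = formPerm c) (hl : c.length = l.length + 1) :
    ∃ t l', Can c t l' ∧ FactEquiv l l' := by
  have := main_goal l [c] hs (by simpa using hn) (by simpa using hc) (by simpa using h0.symm)
    (by simpa using hp)
  obtain ⟨l', h1, h2⟩ := this.2 (by simpa using hl)
  cases h1 with
  | cons _ _ t l ls h hs =>
    cases hs
    exact ⟨t, l, h, by simpa using h2⟩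

end
section
variable {n : ℕ}

theorem Sup.ends {l : List (Perm (Fin n))} {c : List (Fin n)} (h : Sup l c) {a b : Fin n} (hab : a ≠ b)
    (hs : Equiv.swap a b ∈ l) : a ∈ c ∧ b ∈ c := by
  constructor
  · exact h _ hs a (by rw [swap_apply_left]; exact hab.symm)
  · exact h _ hs b (by rw [swap_apply_right]; exact hab)

theorem part {x j : Fin n} {D1 D2 D3 : List (Fin n)} {l1 l2 l3 : List (Perm (Fin n))}
    (h1 : Sup l1 (D1 ++ [j])) (h2 : Sup l2 (j :: D2)) (h3 : Sup l3 (x :: D3))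
    (hn : (x :: (D1 ++ j :: (D2 ++ D3))).Nodup) {a b : Fin n} (hab : a ≠ b)
    (hs : swap a b ∈ l3 ++ (l1 ++ swap x j :: l2)) :
    (a ∈ D1 ++ [j] → b ∈ D1 ++ [j] → swap a b ∈ l1) ∧
    (a ∈ j :: D2 → b ∈ j :: D2 → swap a b ∈ l2) ∧
    (a ∈ x :: D3 → b ∈ x :: D3 → swap a b ∈ l3) := by
  simp only [List.mem_append, List.mem_cons] at hs
  have key : (swap a b ∈ l3 ∧ a ∈ x :: D3 ∧ b ∈ x :: D3) ∨
    (swap a b ∈ l1 ∧ a ∈ D1 ++ [j] ∧ b ∈ D1 ++ [j]) ∨ (a ∈ [x, j] ∧ b ∈ [x, j]) ∨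
    (swap a b ∈ l2 ∧ a ∈ j :: D2 ∧ b ∈ j :: D2) := by
    rcases hs with hs | hs | hs | hs
    · exact Or.inl ⟨hs, h3.ends hab hs⟩
    · exact Or.inr (Or.inl ⟨hs, h1.ends hab hs⟩)
    · exact Or.inr (Or.inr (Or.inl
        ((Sup.swap (a := x) (b := j) (c := [x, j]) (by simp) (by simp)).ends hab (by simp [hs]))))
    · exact Or.inr (Or.inr (Or.inr ⟨hs, h2.ends hab hs⟩))
  clear hs h1 h2 h3
  simp only [List.nodup_append, List.nodup_cons, List.mem_append, List.mem_cons,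
    List.not_mem_nil, or_false] at hn key ⊢
  generalize (swap a b ∈ l1) = p1 at *
  generalize (swap a b ∈ l2) = p2 at *
  generalize (swap a b ∈ l3) = p3 at *
  grind

theorem jlem {x j j' : Fin n} {D1 D2 D3 : List (Fin n)} {l1 l2 l3 : List (Perm (Fin n))}
    (h1 : Sup l1 (D1 ++ [j'])) (h2 : Sup l2 (j' :: D2)) (h3 : Sup l3 (x :: D3))
    (hn : (x :: (D1 ++ j' :: (D2 ++ D3))).Nodup) (hab : x ≠ j)
    (hs : swap x j ∈ l3 ++ (l1 ++ swap x j' :: l2)) : j = j' ∨ j ∈ D3 := by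
  simp only [List.mem_append, List.mem_cons] at hs
  rcases hs with hs | hs | hs | hs
  · have := h3.ends hab hs
    simp only [List.mem_cons] at this
    exact Or.inr (this.2.resolve_left hab.symm)
  · have := (h1.ends hab hs).1
    exfalso
    simp only [List.mem_append, List.mem_cons, List.nodup_cons] at hn this
    grind
  · have := congrArg (fun p : Perm (Fin n) => p x) hs
    simp only [swap_apply_left] at this
    exact Or.inl this
  · have := (h2.ends hab hs).1
    exfalso
    simp only [List.mem_append, List.mem_cons, List.nodup_cons] at hn this
    grind

theorem klem {x j y : Fin n} {D1 D2 D3 as : List (Fin n)} {l1 l2 l3 l2' : List (Perm (Fin n))} {t}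
    (h1 : Sup l1 (D1 ++ [j])) (h2 : Sup l2 (j :: D2)) (h3 : Sup l3 (x :: (y :: as ++ D3)))
    (hn : (x :: (D1 ++ j :: (D2 ++ (y :: as ++ D3)))).Nodup)
    (h2' : Can (j :: (D2 ++ y :: as)) t l2')
    (hs : ∀ s ∈ l2', s ∈ l3 ++ (l1 ++ swap x j :: l2)) : False := by
  have hn2 : (j :: (D2 ++ y :: as)).Nodup := by
    clear * - hn
    simp only [List.nodup_append, List.nodup_cons, List.mem_append, List.mem_cons, List.cons_append] at hn ⊢
    grind
  have hxj : x ≠ j := by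
    rintro rfl
    simp at hn
  have hpres : ∀ s ∈ l2', ∀ z, s z ∈ D1 ++ j :: D2 ↔ z ∈ D1 ++ j :: D2 := by
    intro s hs' z
    have := hs s hs'
    rw [List.mem_append, List.mem_append, List.mem_cons] at this
    rcases this with hm | hm | hm | hm
    · have hdis : ∀ z ∈ D1 ++ j :: D2, s z = z := by
        intro z hz
        by_contra hne
        have := h3 s hm z hne
        clear * - hn hz this
        simp only [List.nodup_append, List.nodup_cons, List.mem_append, List.mem_cons, List.cons_append] at hn hz this
        grind
      constructor
      · intro h
        have := s.injective (hdis _ h)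
        rwa [this] at h
      · intro h
        rwa [hdis z h]
    · exact (h1.mono (d := D1 ++ j :: D2) (by intro y; simp; tauto)).mem_iff hm z
    · exfalso
      rw [hm] at hs'
      have := (h2'.sup.ends hxj hs').1
      clear * - hn this
      simp only [List.nodup_cons, List.mem_append, List.mem_cons, List.cons_append] at hn this
      grind
    · exact (h2.mono (d := D1 ++ j :: D2) (by intro y; simp; tauto)).mem_iff hm z
  have hprod : ∀ L : List (Perm (Fin n)), (∀ s ∈ L, ∀ z, s z ∈ D1 ++ j :: D2 ↔ z ∈ D1 ++ j :: D2) →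
      ∀ z, L.prod z ∈ D1 ++ j :: D2 ↔ z ∈ D1 ++ j :: D2 := by
    intro L
    induction L with
    | nil => intro _ z; simp
    | cons s L ih =>
      intro hL z
      rw [List.prod_cons, Equiv.Perm.mul_apply, hL s (by simp), ih fun s h => hL s (by simp [h])]
  have hP := hprod l2' hpres
  rw [h2'.prod hn2] at hP
  obtain ⟨Z, z, hz⟩ : ∃ Z z, j :: D2 = Z ++ [z] :=
    ⟨_, _, (List.dropLast_append_getLast (List.cons_ne_nil j D2)).symm⟩
  have e : j :: (D2 ++ y :: as) = Z ++ z :: y :: as := by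
    rw [← List.cons_append, hz]; simp
  rw [e] at hP hn2
  have hzy : formPerm (Z ++ z :: y :: as) z = y := by
    rw [formPerm_split, Equiv.Perm.mul_apply, formPerm_apply_head _ _ _ hn2.of_append_right]
    apply formPerm_apply_of_notMem
    clear * - hn2
    simp only [List.nodup_append, List.nodup_cons, List.mem_append, List.mem_cons] at hn2 ⊢
    grind
  have h4 := (hP z).2 (by rw [hz]; simp)
  rw [hzy] at h4
  clear * - hn h4
  simp only [List.nodup_append, List.nodup_cons, List.mem_append, List.mem_cons, List.cons_append] at hn h4
  grind

theorem inj (t : TT) : ∀ (c : List (Fin n)) (t' : TT) (l l'), c.Nodup → Can c t l → Can c t' l' →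
    (∀ s, s ∈ l ↔ s ∈ l') → t = t' := by
  induction t with
  | leaf =>
    intro c t' l l' _ h h' _
    have := h.length.1
    rw [h'.length.1] at this
    cases t' with
    | leaf => rfl
    | node => simp [TT.size] at this
  | node t1 t2 t3 ih1 ih2 ih3 =>
    intro c t' l l' hn h h' hmem
    cases h with
    | node x j D1 D2 D3 _ _ _ l1 l2 l3 h1 h2 h3 =>
    generalize hC : x :: (D1 ++ j :: (D2 ++ D3)) = C at h'
    cases h' with
    | leaf => simp at hC
    | node x' j' D1' D2' D3' t1' t2' t3' l1' l2' l3' h1' h2' h3' =>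
    have hn' := hn
    rw [hC] at hn'
    simp only [List.cons.injEq] at hC
    obtain ⟨rfl, hC⟩ := hC
    have hxj : x ≠ j := by rintro rfl; simp at hn
    have hxj' : x ≠ j' := by rintro rfl; simp at hn'
    have hj := jlem h1'.sup h2'.sup h3'.sup hn' hxj ((hmem _).1 (by simp))
    have hj' := jlem h1.sup h2.sup h3.sup hn hxj' ((hmem _).2 (by simp))
    have hD : D1 = D1' ∧ j = j' := by
      rcases split2 hC with ⟨Y1, e1, _⟩ | ⟨X2, e1, e2⟩
      · exfalso
        subst e1
        clear * - hn' hj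
        simp only [List.nodup_append, List.nodup_cons, List.mem_append, List.mem_cons] at hn'
        grind
      · rcases X2 with _ | ⟨y, X2⟩
        · simp only [List.nil_append, List.cons.injEq] at e2
          exact ⟨by simpa using e1, e2.1.symm⟩
        · exfalso
          simp only [List.cons_append, List.cons.injEq] at e2
          obtain ⟨rfl, _⟩ := e2
          subst e1
          clear * - hn hj'
          simp only [List.nodup_append, List.nodup_cons, List.mem_append, List.mem_cons] at hn
          grind
    obtain ⟨rfl, rfl⟩ := hD
    clear hj hj'
    have hC2 : D2 ++ D3 = D2' ++ D3' := by simpa using hC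
    have hD2 : D2 = D2' ∧ D3 = D3' := by
      rcases List.append_eq_append_iff.1 hC2 with ⟨as, e1, e2⟩ | ⟨as, e1, e2⟩
      · rcases as with _ | ⟨y, as⟩
        · exact ⟨by simpa using e1.symm, by simpa using e2⟩
        · exfalso
          subst e1 e2
          exact klem h1.sup h2.sup h3.sup hn h2' fun s hs => (hmem s).2 (by simp [hs])
      · rcases as with _ | ⟨y, as⟩
        · exact ⟨by simpa using e1, by simpa using e2.symm⟩
        · exfalso
          subst e1 e2
          exact klem h1'.sup h2'.sup h3'.sup hn' h2 fun s hs => (hmem s).1 (by simp [hs])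
    obtain ⟨rfl, rfl⟩ := hD2
    have n1 : (D1 ++ [j]).Nodup := by
      clear * - hn
      grind
    have n2 : (j :: D2).Nodup := by
      clear * - hn
      grind
    have n3 : (x :: D3).Nodup := by
      clear * - hn
      grind
    congr 1
    · refine ih1 _ _ _ _ n1 h1 h1' fun s => ⟨fun hs => ?_, fun hs => ?_⟩
      · obtain ⟨a, b, hab, rfl⟩ := h1.isSwap n1 s hs
        obtain ⟨ha, hb⟩ := h1.sup.ends hab hs
        exact (part h1'.sup h2'.sup h3'.sup hn hab ((hmem _).1 (by simp [hs]))).1 ha hb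
      · obtain ⟨a, b, hab, rfl⟩ := h1'.isSwap n1 s hs
        obtain ⟨ha, hb⟩ := h1'.sup.ends hab hs
        exact (part h1.sup h2.sup h3.sup hn hab ((hmem _).2 (by simp [hs]))).1 ha hb
    · refine ih2 _ _ _ _ n2 h2 h2' fun s => ⟨fun hs => ?_, fun hs => ?_⟩
      · obtain ⟨a, b, hab, rfl⟩ := h2.isSwap n2 s hs
        obtain ⟨ha, hb⟩ := h2.sup.ends hab hs
        exact (part h1'.sup h2'.sup h3'.sup hn hab ((hmem _).1 (by simp [hs]))).2.1 ha hb
      · obtain ⟨a, b, hab, rfl⟩ := h2'.isSwap n2 s hs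
        obtain ⟨ha, hb⟩ := h2'.sup.ends hab hs
        exact (part h1.sup h2.sup h3.sup hn hab ((hmem _).2 (by simp [hs]))).2.1 ha hb
    · refine ih3 _ _ _ _ n3 h3 h3' fun s => ⟨fun hs => ?_, fun hs => ?_⟩
      · obtain ⟨a, b, hab, rfl⟩ := h3.isSwap n3 s hs
        obtain ⟨ha, hb⟩ := h3.sup.ends hab hs
        exact (part h1'.sup h2'.sup h3'.sup hn hab ((hmem _).1 (by simp [hs]))).2.2 ha hb
      · obtain ⟨a, b, hab, rfl⟩ := h3'.isSwap n3 s hs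
        obtain ⟨ha, hb⟩ := h3'.sup.ends hab hs
        exact (part h1.sup h2.sup h3.sup hn hab ((hmem _).2 (by simp [hs]))).2.2 ha hb

end
theorem canUnique {n : ℕ} {c : List (Fin n)} {t : TT} {l : List (Perm (Fin n))} (h : Can c t l) :
    ∀ {l' : List (Perm (Fin n))}, Can c t l' → l = l' := by
  induction h with
  | leaf x => 
    intro l' h'
    have := h'.length.2
    simp only [TT.size, List.length_eq_zero_iff] at this
    exact this.symm
  | node x j D1 D2 D3 t1 t2 t3 l1 l2 l3 h1 h2 h3 ih1 ih2 ih3 =>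
    intro l' h'
    generalize hC : x :: (D1 ++ j :: (D2 ++ D3)) = C at h'
    cases h' with
    | node x' j' D1' D2' D3' _ _ _ l1' l2' l3' h1' h2' h3' =>
    simp only [List.cons.injEq] at hC
    obtain ⟨rfl, hC⟩ := hC
    have e1 := h1.length.1
    have e1' := h1'.length.1
    have e2 := h2.length.1
    have e2' := h2'.length.1
    simp only [List.length_append, List.length_cons, List.length_nil] at e1 e1' e2 e2'
    obtain ⟨rfl, hC2⟩ := List.append_inj hC (by omega)
    obtain ⟨rfl, hC3⟩ := List.cons.inj hC2
    obtain ⟨rfl, rfl⟩ := List.append_inj hC3 (by omega)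
    rw [ih1 h1', ih2 h2', ih3 h3']

theorem formPerm_finRange (n : ℕ) (hn : 2 ≤ n) : formPerm (List.finRange n) = finRotate n := by
  obtain ⟨m, rfl⟩ : ∃ m, n = m + 1 := ⟨n - 1, by omega⟩
  ext i
  have h := formPerm_apply_getElem (List.finRange (m + 1)) (List.nodup_finRange _) i.1 (by simp; omega)
  simp only [List.getElem_finRange, List.length_finRange] at h
  have e : (Fin.cast List.length_finRange ⟨i.1, by simp; omega⟩ : Fin (m+1)) = i := rfl
  rw [e] at h
  rw [h, finRotate_apply]
  simp [Fin.val_add]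

theorem exists_canon (n : ℕ) (hn : 2 ≤ n) (t : TT) (ht : t.size = n - 1) :
    ∃ f : TransFact n, Can (List.finRange n) t f.1 := by
  obtain ⟨l, hl⟩ := can_exists t (List.finRange n) (by simp; omega)
  refine ⟨⟨l, ?_, hl.isSwap (List.nodup_finRange _), ?_⟩, hl⟩
  · rw [hl.length.2, ht]
  · rw [hl.prod (List.nodup_finRange _), formPerm_finRange n hn]

noncomputable def canon (n : ℕ) (hn : 2 ≤ n) (t : {t : TT // t.size = n - 1}) : TransFact n :=
  (exists_canon n hn t.1 t.2).choose

theorem canon_can (n : ℕ) (hn : 2 ≤ n) (t : {t : TT // t.size = n - 1}) :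
    Can (List.finRange n) t.1 (canon n hn t).1 :=
  (exists_canon n hn t.1 t.2).choose_spec

theorem T_eq (n : ℕ) (hn : 2 ≤ n) : T n = Nat.card {t : TT // t.size = n - 1} := by
  symm
  refine Nat.card_congr (Equiv.ofBijective
    (fun t => Quot.mk (fun l₁ l₂ : TransFact n => FactEquiv l₁.1 l₂.1) (canon n hn t)) ⟨?_, ?_⟩)
  · intro t t' h
    let F : Quot (fun l₁ l₂ : TransFact n => FactEquiv l₁.1 l₂.1) → Set (Perm (Fin n)) :=
      Quot.lift (fun l => {s | s ∈ l.1}) (by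
        intro a b hab
        ext s
        exact (FE.perm hab).mem_iff)
    have h2 : F (Quot.mk _ (canon n hn t)) = F (Quot.mk _ (canon n hn t')) := congrArg F h
    exact Subtype.ext (inj _ _ _ _ _ (List.nodup_finRange n) (canon_can n hn t) (canon_can n hn t')
      fun s => Set.ext_iff.1 h2 s)
  · intro q
    induction q using Quot.ind with
    | mk l =>
    obtain ⟨t, l', hc, he⟩ := surj (c := List.finRange n) (l := l.1) l.2.2.1 (List.nodup_finRange n)
      (List.mem_finRange) (by
        intro h
        have := congrArg List.length h
        simp at this
        omega) (by rw [l.2.2.2, formPerm_finRange n hn]) (by rw [l.2.1]; simp; omega)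
    have ht : t.size = n - 1 := by
      have := hc.length.1
      simp at this
      omega
    obtain ⟨t, rfl⟩ : ∃ t' : {t : TT // t.size = n - 1}, t'.1 = t := ⟨⟨t, ht⟩, rfl⟩
    refine ⟨t, ?_⟩
    have hl' : l'.length = n - 1 ∧ (∀ σ ∈ l', σ.IsSwap) ∧ l'.prod = finRotate n :=
      ⟨by rw [hc.length.2, ht], hc.isSwap (List.nodup_finRange _),
        by rw [hc.prod (List.nodup_finRange _), formPerm_finRange n hn]⟩
    have e1 : Quot.mk (fun l₁ l₂ : TransFact n => FactEquiv l₁.1 l₂.1) l = Quot.mk _ ⟨l', hl'⟩ :=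
      Quot.sound he
    rw [e1]
    have hcc := canon_can n hn t
    have e2 : FactEquiv (canon n hn t).1 l' := by rw [canUnique hcc hc]; exact .refl _
    exact Quot.sound e2

def TT.toP : TT → PTree
  | .leaf => .node 0 Fin.elim0
  | .node a b c => .node 3 ![a.toP, b.toP, c.toP]

theorem TT.toP_inj : ∀ a b : TT, a.toP = b.toP → a = b := by
  intro a
  induction a with
  | leaf =>
    intro b h
    cases b with
    | leaf => rfl
    | node => simp [TT.toP] at h
  | node a1 a2 a3 h1 h2 h3 =>
    intro b h
    cases b with
    | leaf => simp [TT.toP] at h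
    | node b1 b2 b3 =>
      simp only [TT.toP, PTree.node.injEq, heq_eq_eq, true_and] at h
      rw [h1 _ (congrFun h 0), h2 _ (congrFun h 1), h3 _ (congrFun h 2)]

theorem TT.toP_props (t : TT) :
    t.toP.ternary ∧ t.toP.internalCount = t.size ∧ t.toP.numLeaves = 2 * t.size + 1 := by
  induction t with
  | leaf => simp [TT.toP, PTree.ternary, PTree.internalCount, PTree.numLeaves, TT.size]
  | node a b c h1 h2 h3 =>
    obtain ⟨x1, y1, z1⟩ := h1
    obtain ⟨x2, y2, z2⟩ := h2
    obtain ⟨x3, y3, z3⟩ := h3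
    refine ⟨?_, ?_, ?_⟩
    · simp [TT.toP, PTree.ternary, Fin.forall_fin_succ, x1, x2, x3]
    · simp [TT.toP, PTree.internalCount, Fin.sum_univ_three, y1, y2, y3, TT.size]
      omega
    · simp [TT.toP, PTree.numLeaves, Fin.sum_univ_three, z1, z2, z3, TT.size]
      omega

theorem PTree.exists_toP (p : PTree) : p.ternary → ∃ t : TT, t.toP = p := by
  induction p with
  | node k f ih =>
    intro h
    simp only [PTree.ternary] at h
    obtain ⟨rfl | rfl, h⟩ := h
    · refine ⟨.leaf, ?_⟩
      simp only [TT.toP]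
      congr 1
      exact Subsingleton.elim _ _
    · obtain ⟨a, ha⟩ := ih 0 (h 0)
      obtain ⟨b, hb⟩ := ih 1 (h 1)
      obtain ⟨c, hc⟩ := ih 2 (h 2)
      refine ⟨.node a b c, ?_⟩
      simp only [TT.toP]
      congr 1
      funext i
      fin_cases i <;> simp [ha, hb, hc]

theorem card_ptree (n : ℕ) (hn : 2 ≤ n) : Nat.card {t : TT // t.size = n - 1} =
    Nat.card {t : PTree //
        t.ternary ∧ t.internalCount = n - 1 ∧ t.numLeaves = 2 * n - 1} := by
  refine Nat.card_congr (Equiv.ofBijective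
    (fun t => ⟨t.1.toP, t.1.toP_props.1, by rw [t.1.toP_props.2.1, t.2],
      by rw [t.1.toP_props.2.2, t.2]; omega⟩) ⟨?_, ?_⟩)
  · intro a b h
    exact Subtype.ext (TT.toP_inj _ _ (congrArg Subtype.val h))
  · rintro ⟨p, hp, hi, hl⟩
    obtain ⟨t, rfl⟩ := p.exists_toP hp
    exact ⟨⟨t, by rw [← hi, t.toP_props.2.1]⟩, rfl⟩

theorem size0 (t : TT) : t.size = 0 ↔ t = .leaf := by
  cases t <;> simp [TT.size]

theorem size1 (t : TT) : t.size = 1 ↔ t = .node .leaf .leaf .leaf := by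
  cases t with
  | leaf => simp [TT.size]
  | node a b c => simp [TT.size, size0, and_assoc]

theorem size2 (t : TT) : t.size = 2 ↔
    t = .node (.node .leaf .leaf .leaf) .leaf .leaf ∨ t = .node .leaf (.node .leaf .leaf .leaf) .leaf ∨
    t = .node .leaf .leaf (.node .leaf .leaf .leaf) := by
  cases t with
  | leaf => simp [TT.size]
  | node a b c =>
    simp only [TT.size, TT.node.injEq, ← size1, ← size0]
    omega

abbrev o : TT := .leaf
abbrev i1 : TT := .node o o o
abbrev p1 : TT := .node i1 o o
abbrev p2 : TT := .node o i1 o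
abbrev p3 : TT := .node o o i1

theorem size3 (t : TT) : t.size = 3 ↔ t ∈ [TT.node p1 o o, .node p2 o o, .node p3 o o,
    .node o p1 o, .node o p2 o, .node o p3 o, .node o o p1, .node o o p2, .node o o p3,
    .node i1 i1 o, .node i1 o i1, .node o i1 i1] := by
  cases t with
  | leaf => simp [TT.size]
  | node a b c =>
    have ha := size2 a
    have hb := size2 b
    have hc := size2 c
    simp only [TT.size, TT.node.injEq, List.mem_cons, List.not_mem_nil, or_false]
    have : a.size + b.size + c.size + 1 = 3 ↔
      (a.size = 2 ∧ b.size = 0 ∧ c.size = 0) ∨ (a.size = 0 ∧ b.size = 2 ∧ c.size = 0) ∨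
      (a.size = 0 ∧ b.size = 0 ∧ c.size = 2) ∨ (a.size = 1 ∧ b.size = 1 ∧ c.size = 0) ∨
      (a.size = 1 ∧ b.size = 0 ∧ c.size = 1) ∨ (a.size = 0 ∧ b.size = 1 ∧ c.size = 1) := by omega
    rw [this]
    simp only [size0, size1, ha, hb, hc]
    clear this ha hb hc
    constructor
    · rintro (⟨rfl | rfl | rfl, rfl, rfl⟩ | ⟨rfl, rfl | rfl | rfl, rfl⟩ | ⟨rfl, rfl, rfl | rfl | rfl⟩ |
        ⟨rfl, rfl, rfl⟩ | ⟨rfl, rfl, rfl⟩ | ⟨rfl, rfl, rfl⟩) <;> simp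
    · rintro (⟨rfl, rfl, rfl⟩ | ⟨rfl, rfl, rfl⟩ | ⟨rfl, rfl, rfl⟩ | ⟨rfl, rfl, rfl⟩ | ⟨rfl, rfl, rfl⟩ |
        ⟨rfl, rfl, rfl⟩ | ⟨rfl, rfl, rfl⟩ | ⟨rfl, rfl, rfl⟩ | ⟨rfl, rfl, rfl⟩ | ⟨rfl, rfl, rfl⟩ |
        ⟨rfl, rfl, rfl⟩ | ⟨rfl, rfl, rfl⟩) <;> simp

theorem card_list (m : ℕ) (L : List TT) (hL : L.Nodup) (h : ∀ t : TT, t.size = m ↔ t ∈ L) :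
    Nat.card {t : TT // t.size = m} = L.length := by
  classical
  rw [Nat.card_congr (Equiv.subtypeEquivRight (q := fun t => t ∈ L.toFinset) (by simpa using h))]
  rw [Nat.card_eq_fintype_card, Fintype.card_coe, List.toFinset_card_of_nodup hL]

theorem trans_fact_count_trees_and_values :
    (∀ n : ℕ, 2 ≤ n →
      T n = Nat.card {t : PTree //
        t.ternary ∧ t.internalCount = n - 1 ∧ t.numLeaves = 2 * n - 1}) ∧
    T 2 = 1 ∧ T 3 = 3 ∧ T 4 = 12 := by
  refine ⟨fun n hn => (T_eq n hn).trans (card_ptree n hn), ?_, ?_, ?_⟩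
  · rw [T_eq 2 (by omega)]
    exact card_list 1 [i1] (by simp) (by simp [size1])
  · rw [T_eq 3 (by omega)]
    exact card_list 2 [p1, p2, p3] (by simp) (by simp [size2])
  · rw [T_eq 4 (by omega)]
    exact card_list 3 _ (by simp) size3
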